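/- For α ∈ (-1/2, 0) ∪ (0, 1/2), the normalizing constant satisfies the closed form Γ_α² = (√π · Γ(1+α) / (2^{2α+1} Γ(3/2+α))) · (sec(πα)(a² + b²) − 2ab), where Γ_α² = ∫_ℝ (q_α(y-1) - q_α(y))² dy and q_α(x) = (a·1{x ≥ 0} + b·1{x < 0})|x|^α. -/

import Mathlib

open Real MeasureTheory

noncomputable def qCusp (a b α : ℝ) (x : ℝ) : ℝ :=
  (if 0 ≤ x then a else b) * |x| ^ α

/-!
Cutting `ℝ` at the two singularities `0` and `1` of the integrand turns the integral into
`(a² + b²) I + J`, where `I = ∫₀^∞ ((1 + t)^α - t^α)² dt` and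
`J = ∫₀¹ (b (1 - y)^α - a y^α)² dy = (a² + b²) / (2α + 1) - 2ab B(1 + α, 1 + α)`.

Expanding the square in `I` gives divergent integrals. Instead, integrating by parts,
`(2α + 1) ((1 + t)^α - t^α)²` is the derivative of an elementary function plus
`(1 - α) t^α (1 + t)^(α - 2)`. The elementary function goes from `1` at `0` to `0` at `∞`, and the
remainder is a beta integral of the second kind, so
`(2α + 1) I = (1 - α) B(1 + α, 1 - 2α) - 1`. The reflection and duplication formulas for `Γ` give
`(1 - α) B(1 + α, 1 - 2α) = (2α + 1) sec(πα) B(1 + α, 1 + α)`; the terms `± (a² + b²) / (2α + 1)`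
cancel, and duplication rewrites `B(1 + α, 1 + α)` as the stated prefactor.
-/

open Filter Set Topology Asymptotics
open ProbabilityTheory (beta beta_eq_betaIntegralReal)

section BetaIntegral

variable {p q : ℝ}

theorem ofReal_rpow_mul_one_sub_rpow (p q : ℝ) {x : ℝ} (hx : x ∈ Icc (0 : ℝ) 1) :
    ((x ^ p * (1 - x) ^ q : ℝ) : ℂ)
      = (x : ℂ) ^ (((p + 1 : ℝ) : ℂ) - 1) * (1 - (x : ℂ)) ^ (((q + 1 : ℝ) : ℂ) - 1) := by
  rw [Complex.ofReal_mul, Complex.ofReal_cpow hx.1, Complex.ofReal_cpow (sub_nonneg.2 hx.2)]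
  push_cast
  simp only [add_sub_cancel_right]

theorem integrableOn_rpow_mul_one_sub_rpow (hp : -1 < p) (hq : -1 < q) :
    IntegrableOn (fun x : ℝ => x ^ p * (1 - x) ^ q) (Ioo 0 1) := by
  have hβ := (intervalIntegrable_iff_integrableOn_Ioo_of_le zero_le_one).1
    (Complex.betaIntegral_convergent (u := ((p + 1 : ℝ) : ℂ)) (v := ((q + 1 : ℝ) : ℂ))
      (by rw [Complex.ofReal_re]; linarith) (by rw [Complex.ofReal_re]; linarith))
  refine IntegrableOn.congr_fun hβ.re (fun x hx => ?_) measurableSet_Ioo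
  simp only [← ofReal_rpow_mul_one_sub_rpow p q (Ioo_subset_Icc_self hx), RCLike.re_to_complex,
    Complex.ofReal_re]

theorem integral_rpow_mul_one_sub_rpow (hp : -1 < p) (hq : -1 < q) :
    ∫ x in Ioo (0 : ℝ) 1, x ^ p * (1 - x) ^ q = beta (p + 1) (q + 1) := by
  rw [beta_eq_betaIntegralReal _ _ (by linarith) (by linarith), Complex.betaIntegral,
    intervalIntegral.integral_of_le zero_le_one, integral_Ioc_eq_integral_Ioo,
    ← setIntegral_congr_fun measurableSet_Ioo
      fun x hx => ofReal_rpow_mul_one_sub_rpow p q (Ioo_subset_Icc_self hx),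
    integral_complex_ofReal, Complex.ofReal_re]

theorem hasDerivAt_div_one_add {t : ℝ} (ht : 1 + t ≠ 0) :
    HasDerivAt (fun t : ℝ => t / (1 + t)) (1 / (1 + t) ^ 2) t :=
  ((hasDerivAt_id t).div ((hasDerivAt_id t).const_add 1) ht).congr_deriv (by simp)

theorem injOn_div_one_add : InjOn (fun t : ℝ => t / (1 + t)) (Ioi 0) := by
  intro s (hs : 0 < s) t (ht : 0 < t) hst
  have : s * (1 + t) = t * (1 + s) := (div_eq_div_iff (by positivity) (by positivity)).1 hst
  linarith

theorem image_div_one_add_Ioi : (fun t : ℝ => t / (1 + t)) '' Ioi 0 = Ioo 0 1 := by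
  ext x
  constructor
  · rintro ⟨t, ht : 0 < t, rfl⟩
    exact ⟨by positivity, (div_lt_one (by positivity)).2 (by linarith)⟩
  · rintro ⟨hx0, hx1⟩
    have h1x : 0 < 1 - x := sub_pos.2 hx1
    refine ⟨x / (1 - x), div_pos hx0 h1x, ?_⟩
    field_simp
    ring

theorem abs_deriv_smul_comp_div_one_add (p q : ℝ) {t : ℝ} (ht : 0 < t) :
    |1 / (1 + t) ^ 2| • ((t / (1 + t)) ^ p * (1 - t / (1 + t)) ^ (-2 - p - q))
      = t ^ p * (1 + t) ^ q := by
  have h1t : 0 < 1 + t := by positivity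
  have hcompl : 1 - t / (1 + t) = (1 + t)⁻¹ := by field_simp; ring
  have hexp : (1 + t) ^ (-2 - p - q) = ((1 + t) ^ 2 * (1 + t) ^ p * (1 + t) ^ q)⁻¹ := by
    rw [← rpow_natCast, ← rpow_add h1t, ← rpow_add h1t, ← rpow_neg h1t.le]
    push_cast
    ring_nf
  rw [abs_of_pos (by positivity), smul_eq_mul, hcompl, div_rpow ht.le h1t.le, inv_rpow h1t.le,
    hexp, inv_inv]
  field_simp

theorem integrableOn_Ioi_rpow_mul_one_add_rpow (hp : -1 < p) (hpq : p + q < -1) :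
    IntegrableOn (fun t : ℝ => t ^ p * (1 + t) ^ q) (Ioi 0) := by
  have h := integrableOn_rpow_mul_one_sub_rpow hp (q := -2 - p - q) (by linarith)
  rw [← image_div_one_add_Ioi, integrableOn_image_iff_integrableOn_abs_deriv_smul measurableSet_Ioi
    (fun t (ht : 0 < t) => (hasDerivAt_div_one_add (by positivity)).hasDerivWithinAt)
    injOn_div_one_add] at h
  exact h.congr_fun (fun t ht => abs_deriv_smul_comp_div_one_add p q ht) measurableSet_Ioi

theorem integral_Ioi_rpow_mul_one_add_rpow (hp : -1 < p) (hpq : p + q < -1) :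
    ∫ t in Ioi (0 : ℝ), t ^ p * (1 + t) ^ q = beta (p + 1) (-1 - p - q) := by
  have h := integral_rpow_mul_one_sub_rpow hp (q := -2 - p - q) (by linarith)
  rw [← image_div_one_add_Ioi, integral_image_eq_integral_abs_deriv_smul measurableSet_Ioi
    (fun t (ht : 0 < t) => (hasDerivAt_div_one_add (by positivity)).hasDerivWithinAt)
    injOn_div_one_add, setIntegral_congr_fun measurableSet_Ioi
    fun t ht => abs_deriv_smul_comp_div_one_add p q ht] at h
  rw [h]
  ring_nf

end BetaIntegral

section BetaIdentities

variable {α s : ℝ}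

theorem beta_comm (u v : ℝ) : beta u v = beta v u := by
  rw [beta, beta, mul_comm, add_comm]

theorem beta_one_right (hs : 0 < s) : beta s 1 = s⁻¹ := by
  have hΓ := (Gamma_pos_of_pos hs).ne'
  rw [beta, Gamma_one, Gamma_add_one hs.ne']
  field_simp

theorem beta_self (hs : 0 < s) :
    beta s s = √π * Gamma s / (2 ^ (2 * s - 1) * Gamma (s + 1 / 2)) := by
  have hdup := Gamma_mul_Gamma_add_half s
  have h2s := (Gamma_pos_of_pos (mul_pos two_pos hs)).ne'
  have hhalf := (Gamma_pos_of_pos (add_pos hs one_half_pos)).ne'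
  have hpow := (rpow_pos_of_pos (zero_lt_two' ℝ) (2 * s - 1)).ne'
  rw [← neg_sub, rpow_neg zero_le_two, mul_right_comm, ← div_eq_mul_inv, eq_div_iff hpow] at hdup
  rw [beta, ← two_mul, div_eq_div_iff h2s (mul_ne_zero hpow hhalf)]
  linear_combination Gamma s * hdup

theorem Gamma_one_add_two_mul_mul_Gamma_one_sub_two_mul (α : ℝ) :
    Gamma (1 + 2 * α) * Gamma (1 - 2 * α) = Gamma (1 + α) * Gamma (1 - α) / cos (π * α) := by
  have hdup (x : ℝ) : Gamma (1 / 2 + x) * Gamma (1 + x)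
      = Gamma (1 + 2 * x) * 2 ^ (-(2 * x)) * √π := by
    convert Gamma_mul_Gamma_add_half (1 / 2 + x) using 3 <;> ring_nf
  have hrefl : Gamma (1 / 2 + α) * Gamma (1 / 2 - α) = π / cos (π * α) := by
    convert Gamma_mul_Gamma_one_sub (1 / 2 + α) using 2
    · ring_nf
    · rw [← sin_pi_div_two_sub, ← sin_pi_sub]
      ring_nf
  have hpow : (2 : ℝ) ^ (-(2 * α)) * 2 ^ (-(2 * -α)) = 1 := by
    rw [← rpow_add two_pos]
    simp
  have hneg := hdup (-α)
  rw [← sub_eq_add_neg, ← sub_eq_add_neg, mul_neg, ← sub_eq_add_neg, ← mul_neg] at hneg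
  apply mul_right_cancel₀ pi_ne_zero
  calc Gamma (1 + 2 * α) * Gamma (1 - 2 * α) * π
      = Gamma (1 + 2 * α) * Gamma (1 - 2 * α)
          * (2 ^ (-(2 * α)) * 2 ^ (-(2 * -α))) * (√π * √π) := by
        rw [hpow, mul_self_sqrt pi_pos.le, mul_one]
    _ = (Gamma (1 + 2 * α) * 2 ^ (-(2 * α)) * √π)
          * (Gamma (1 - 2 * α) * 2 ^ (-(2 * -α)) * √π) := by ring
    _ = (Gamma (1 / 2 + α) * Gamma (1 / 2 - α)) * (Gamma (1 + α) * Gamma (1 - α)) := by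
        rw [← hdup, ← hneg]; ring
    _ = Gamma (1 + α) * Gamma (1 - α) / cos (π * α) * π := by rw [hrefl]; ring

theorem one_sub_mul_beta_one_add_one_sub_two_mul (h₁ : -(1 / 2) < α) (h₂ : α < 1) :
    (1 - α) * beta (1 + α) (1 - 2 * α)
      = (2 * α + 1) * ((cos (π * α))⁻¹ * beta (1 + α) (1 + α)) := by
  have hα : 1 - α ≠ 0 := by linarith
  have hα' : 2 * α + 1 ≠ 0 := by linarith
  have hΓ : Gamma (1 - α) ≠ 0 := (Gamma_pos_of_pos (by linarith)).ne'
  have hΓ' : Gamma (1 + 2 * α) ≠ 0 := (Gamma_pos_of_pos (by linarith)).ne'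
  have hrec : Gamma (1 + α + (1 - 2 * α)) = (1 - α) * Gamma (1 - α) := by
    rw [← Gamma_add_one hα]; ring_nf
  have hrec' : Gamma (1 + α + (1 + α)) = (2 * α + 1) * Gamma (1 + 2 * α) := by
    rw [add_comm 1 (2 * α), ← Gamma_add_one hα']; ring_nf
  have hΓΓ : Gamma (1 - 2 * α)
      = Gamma (1 + α) * Gamma (1 - α) / cos (π * α) / Gamma (1 + 2 * α) := by
    rw [← Gamma_one_add_two_mul_mul_Gamma_one_sub_two_mul, mul_div_cancel_left₀ _ hΓ']
  have cancel {c : ℝ} (hc : c ≠ 0) (x y : ℝ) : c * (x / (c * y)) = x / y := by field_simp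
  rw [beta, beta, hrec, hrec', mul_left_comm, cancel hα, cancel hα', hΓΓ]
  field_simp

end BetaIdentities

section PowerIncrement

variable {α t : ℝ}

theorem rpow_two_mul {x : ℝ} (hx : 0 ≤ x) (p : ℝ) : x ^ (2 * p) = (x ^ p) ^ 2 := by
  rw [mul_comm]
  exact_mod_cast rpow_mul_natCast hx p 2

theorem abs_one_add_rpow_sub_rpow_le (hα : α ≤ 1) (ht : 0 < t) :
    |(1 + t) ^ α - t ^ α| ≤ |α| * t ^ (α - 1) := by
  have hderiv : ∀ x ∈ Icc t (1 + t),
      HasDerivWithinAt (fun x : ℝ => x ^ α) (α * x ^ (α - 1)) (Icc t (1 + t)) x := fun x hx =>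
    (hasDerivAt_rpow_const (Or.inl (ht.trans_le hx.1).ne')).hasDerivWithinAt
  have hbound : ∀ x ∈ Icc t (1 + t), ‖α * x ^ (α - 1)‖ ≤ |α| * t ^ (α - 1) := by
    intro x hx
    rw [norm_mul, norm_eq_abs, norm_of_nonneg (rpow_nonneg (ht.trans_le hx.1).le _)]
    exact mul_le_mul_of_nonneg_left
      (rpow_le_rpow_of_nonpos ht hx.1 (sub_nonpos.2 hα)) (abs_nonneg α)
  simpa using (convex_Icc t (1 + t)).norm_image_sub_le_of_norm_hasDerivWithin_le hderiv hbound
    (left_mem_Icc.2 (by linarith)) (right_mem_Icc.2 (by linarith))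

theorem integrableOn_Ioc_sq_one_add_rpow_sub_rpow (h₁ : -(1 / 2) < α) (h₂ : α ≤ 1) :
    IntegrableOn (fun t : ℝ => ((1 + t) ^ α - t ^ α) ^ 2) (Ioc 0 1) := by
  have hpow : IntegrableOn (fun t : ℝ => t ^ (2 * α)) (Ioc 0 1) :=
    (intervalIntegrable_iff_integrableOn_Ioc_of_le zero_le_one).1
      (intervalIntegral.intervalIntegrable_rpow' (by linarith))
  refine Integrable.mono' ((integrable_const 8).add (hpow.const_mul 2)) (by fun_prop) ?_
  filter_upwards [ae_restrict_mem measurableSet_Ioc] with t ht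
  have hle : (1 + t) ^ α ≤ 2 := calc
    (1 + t) ^ α ≤ (1 + t) ^ (1 : ℝ) :=
      rpow_le_rpow_of_exponent_le (by linarith [ht.1]) h₂
    _ ≤ 2 := by rw [rpow_one]; linarith [ht.2]
  have hnonneg : 0 ≤ (1 + t) ^ α := rpow_nonneg (by linarith [ht.1]) α
  rw [norm_of_nonneg (sq_nonneg _), Pi.add_apply, rpow_two_mul ht.1.le]
  nlinarith [sq_nonneg ((1 + t) ^ α + t ^ α)]

theorem integrableOn_Ioi_one_sq_one_add_rpow_sub_rpow (hα : α < 1 / 2) :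
    IntegrableOn (fun t : ℝ => ((1 + t) ^ α - t ^ α) ^ 2) (Ioi 1) := by
  refine Integrable.mono'
    ((integrableOn_Ioi_rpow_of_lt (a := 2 * (α - 1)) (by linarith) one_pos).const_mul (α ^ 2))
    (by fun_prop) ?_
  filter_upwards [ae_restrict_mem measurableSet_Ioi] with t (ht : 1 < t)
  have ht0 : 0 < t := by linarith
  rw [norm_of_nonneg (sq_nonneg _), rpow_two_mul ht0.le, ← sq_abs, ← sq_abs α, ← mul_pow]
  exact pow_le_pow_left₀ (abs_nonneg _) (abs_one_add_rpow_sub_rpow_le (by linarith) ht0) 2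

theorem integrableOn_Ioi_sq_one_add_rpow_sub_rpow (h₁ : -(1 / 2) < α) (h₂ : α < 1 / 2) :
    IntegrableOn (fun t : ℝ => ((1 + t) ^ α - t ^ α) ^ 2) (Ioi 0) := by
  rw [← Ioc_union_Ioi_eq_Ioi zero_le_one]
  exact (integrableOn_Ioc_sq_one_add_rpow_sub_rpow h₁ (by linarith)).union
    (integrableOn_Ioi_one_sq_one_add_rpow_sub_rpow h₂)

/-- The elementary part of an antiderivative of `(2 * α + 1) * ((1 + t) ^ α - t ^ α) ^ 2`; what
remains is the beta-type integrand `(1 - α) * (t ^ α * (1 + t) ^ (α - 2))`. -/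
noncomputable def cuspBoundary (α t : ℝ) : ℝ :=
  (1 + t) ^ (2 * α + 1) + t ^ (2 * α + 1) - 2 * (t ^ (α + 1) * (1 + t) ^ α)
    - t ^ (α + 1) * (1 + t) ^ (α - 1)

theorem hasDerivAt_cuspBoundary (α : ℝ) (ht : 0 < t) :
    HasDerivAt (cuspBoundary α)
      ((2 * α + 1) * ((1 + t) ^ α - t ^ α) ^ 2 - (1 - α) * (t ^ α * (1 + t) ^ (α - 2))) t := by
  have h1t : 0 < 1 + t := by linarith
  have hd (p : ℝ) : HasDerivAt (fun x : ℝ => x ^ p) (p * t ^ (p - 1)) t :=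
    hasDerivAt_rpow_const (Or.inl ht.ne')
  have hd' (p : ℝ) : HasDerivAt (fun x : ℝ => (1 + x) ^ p) (p * (1 + t) ^ (p - 1)) t := by
    simpa using ((hasDerivAt_id t).const_add 1).rpow_const (p := p) (Or.inl h1t.ne')
  refine ((((hd' (2 * α + 1)).add (hd (2 * α + 1))).sub
    (((hd (α + 1)).mul (hd' α)).const_mul 2)).sub
    ((hd (α + 1)).mul (hd' (α - 1)))).congr_deriv ?_
  have hsub_two : (1 + t) ^ (α - 2) = (1 + t) ^ α / (1 + t) ^ 2 := by
    exact_mod_cast rpow_sub_natCast h1t.ne' α 2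
  simp only [add_sub_cancel_right, rpow_two_mul ht.le, rpow_two_mul h1t.le, rpow_add_one ht.ne',
    sub_sub, one_add_one_eq_two, hsub_two, rpow_sub_one h1t.ne']
  field_simp
  ring

theorem cuspBoundary_zero (hα : -(1 / 2) < α) : cuspBoundary α 0 = 1 := by
  rw [cuspBoundary, zero_rpow (by linarith : 2 * α + 1 ≠ 0),
    zero_rpow (by linarith : α + 1 ≠ 0)]
  simp

theorem continuousAt_cuspBoundary_zero (hα : -(1 / 2) < α) :
    ContinuousAt (cuspBoundary α) 0 := by
  have hpow (p : ℝ) (hp : 0 ≤ p) : ContinuousAt (fun t : ℝ => t ^ p) 0 :=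
    continuousAt_rpow_const _ _ (Or.inr hp)
  have hpow' (p : ℝ) : ContinuousAt (fun t : ℝ => (1 + t) ^ p) 0 :=
    (continuousAt_const.add continuousAt_id).rpow_const (Or.inl (by simp))
  exact (((hpow' _).add (hpow _ (by linarith))).sub
    (continuousAt_const.mul ((hpow _ (by linarith)).mul (hpow' _)))).sub
    ((hpow _ (by linarith)).mul (hpow' _))

-- In this form the decay at infinity is visible: each increment is smaller than `t ^ α` by a
-- factor `t⁻¹`.
theorem cuspBoundary_eq_of_pos (α : ℝ) (ht : 0 < t) :
    cuspBoundary α t = t * ((1 + t) ^ α - t ^ α) ^ 2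
      + (1 + t) ^ α * ((1 + t) ^ α - t ^ α) + (1 + t) ^ (α - 1) * t ^ α := by
  have h1t : 0 < 1 + t := by linarith
  rw [cuspBoundary, rpow_add_one h1t.ne', rpow_add_one ht.ne', rpow_add_one ht.ne',
    rpow_sub_one h1t.ne', rpow_two_mul h1t.le, rpow_two_mul ht.le]
  field_simp
  ring

theorem isBigO_one_add_rpow_sub_rpow (hα : α ≤ 1) :
    (fun t : ℝ => (1 + t) ^ α - t ^ α) =O[atTop] fun t => t ^ (α - 1) := by
  refine IsBigO.of_bound |α| ?_
  filter_upwards [eventually_gt_atTop 0] with t ht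
  rw [norm_eq_abs, norm_of_nonneg (rpow_nonneg ht.le _)]
  exact abs_one_add_rpow_sub_rpow_le hα ht

theorem isBigO_one_add_rpow (p : ℝ) :
    (fun t : ℝ => (1 + t) ^ p) =O[atTop] fun t => t ^ p := by
  have hΘ : (fun t : ℝ => 1 + t) =Θ[atTop] id :=
    (isLittleO_const_id_atTop (1 : ℝ)).right_isTheta_add.symm
  exact (hΘ.rpow ((eventually_ge_atTop 0).mono fun t ht => add_nonneg zero_le_one ht)
    (eventually_ge_atTop 0)).isBigO

theorem isBigO_cuspBoundary (hα : α ≤ 1) :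
    cuspBoundary α =O[atTop] fun t => t ^ (2 * α - 1) := by
  have hinc := isBigO_one_add_rpow_sub_rpow hα
  have hid : (id : ℝ → ℝ) =O[atTop] fun t => t ^ (1 : ℝ) := by
    simp only [rpow_one]
    exact isBigO_refl _ _
  have hsq := hinc.mul_atTop_rpow_of_isBigO_rpow (α - 1) (α - 1) (2 * α - 2) hinc (by linarith)
  have h₁ := hid.mul_atTop_rpow_of_isBigO_rpow 1 (2 * α - 2) (2 * α - 1) hsq (by linarith)
  have h₂ := (isBigO_one_add_rpow α).mul_atTop_rpow_of_isBigO_rpow α (α - 1) (2 * α - 1)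
    hinc (by linarith)
  have h₃ := (isBigO_one_add_rpow (α - 1)).mul_atTop_rpow_of_isBigO_rpow (α - 1) α
    (2 * α - 1) (isBigO_refl _ _) (by linarith)
  refine ((h₁.add h₂).add h₃).congr' ?_ EventuallyEq.rfl
  filter_upwards [eventually_gt_atTop 0] with t ht
  rw [cuspBoundary_eq_of_pos α ht]
  simp only [Pi.mul_apply, id_eq, sq]

theorem tendsto_cuspBoundary_atTop (hα : α < 1 / 2) :
    Tendsto (cuspBoundary α) atTop (𝓝 0) := by
  refine (isBigO_cuspBoundary (by linarith)).trans_tendsto ?_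
  simpa only [neg_sub] using tendsto_rpow_neg_atTop (y := 1 - 2 * α) (by linarith)

theorem two_mul_add_one_mul_integral_Ioi_sq_one_add_rpow_sub_rpow
    (h₁ : -(1 / 2) < α) (h₂ : α < 1 / 2) :
    (2 * α + 1) * ∫ t in Ioi (0 : ℝ), ((1 + t) ^ α - t ^ α) ^ 2
      = (1 - α) * beta (1 + α) (1 - 2 * α) - 1 := by
  have hsq := (integrableOn_Ioi_sq_one_add_rpow_sub_rpow h₁ h₂).const_mul (2 * α + 1)
  have hβ := (integrableOn_Ioi_rpow_mul_one_add_rpow (p := α) (q := α - 2) (by linarith)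
    (by linarith)).const_mul (1 - α)
  have hFTC := integral_Ioi_of_hasDerivAt_of_tendsto
    (continuousAt_cuspBoundary_zero h₁).continuousWithinAt
    (fun t ht => hasDerivAt_cuspBoundary α ht) (hsq.sub hβ) (tendsto_cuspBoundary_atTop h₂)
  rw [integral_sub hsq hβ, integral_const_mul, integral_const_mul,
    integral_Ioi_rpow_mul_one_add_rpow (by linarith) (by linarith), cuspBoundary_zero h₁,
    show -1 - α - (α - 2) = 1 - 2 * α by ring, add_comm α 1] at hFTC
  linarith

theorem integral_Ioi_sq_one_add_rpow_sub_rpow (h₁ : -(1 / 2) < α) (h₂ : α < 1 / 2) :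
    ∫ t in Ioi (0 : ℝ), ((1 + t) ^ α - t ^ α) ^ 2
      = (cos (π * α))⁻¹ * beta (1 + α) (1 + α) - (2 * α + 1)⁻¹ := by
  have hα : 2 * α + 1 ≠ 0 := by linarith
  apply mul_left_cancel₀ hα
  rw [two_mul_add_one_mul_integral_Ioi_sq_one_add_rpow_sub_rpow h₁ h₂,
    one_sub_mul_beta_one_add_one_sub_two_mul h₁ (by linarith), mul_sub, mul_inv_cancel₀ hα]

end PowerIncrement

section ReflectedPowers

variable {α : ℝ}

theorem sq_one_sub_rpow_sub_rpow (a b α : ℝ) {y : ℝ} (hy : y ∈ Ioo (0 : ℝ) 1) :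
    (b * (1 - y) ^ α - a * y ^ α) ^ 2
      = a ^ 2 * (y ^ (2 * α) * (1 - y) ^ (0 : ℝ)) + b ^ 2 * (y ^ (0 : ℝ) * (1 - y) ^ (2 * α))
        - 2 * a * b * (y ^ α * (1 - y) ^ α) := by
  rw [rpow_two_mul hy.1.le, rpow_two_mul (sub_pos.2 hy.2).le, rpow_zero, rpow_zero]
  ring

theorem integrableOn_sq_one_sub_rpow_sub_rpow (a b : ℝ) (hα : -(1 / 2) < α) :
    IntegrableOn (fun y : ℝ => (b * (1 - y) ^ α - a * y ^ α) ^ 2) (Ioo 0 1) := by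
  have hβ (p q : ℝ) := integrableOn_rpow_mul_one_sub_rpow (p := p) (q := q)
  refine IntegrableOn.congr_fun ?_
    (fun y hy => (sq_one_sub_rpow_sub_rpow a b α hy).symm) measurableSet_Ioo
  exact (((hβ (2 * α) 0 (by linarith) (by linarith)).const_mul _).add
    ((hβ 0 (2 * α) (by linarith) (by linarith)).const_mul _)).sub
    ((hβ α α (by linarith) (by linarith)).const_mul _)

theorem integral_sq_one_sub_rpow_sub_rpow (a b : ℝ) (hα : -(1 / 2) < α) :
    ∫ y in Ioo (0 : ℝ) 1, (b * (1 - y) ^ α - a * y ^ α) ^ 2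
      = (a ^ 2 + b ^ 2) * (2 * α + 1)⁻¹ - 2 * a * b * beta (1 + α) (1 + α) := by
  have hleft := (integrableOn_rpow_mul_one_sub_rpow (p := 2 * α) (q := 0) (by linarith)
    (by linarith)).const_mul (a ^ 2)
  have hright := (integrableOn_rpow_mul_one_sub_rpow (p := 0) (q := 2 * α) (by linarith)
    (by linarith)).const_mul (b ^ 2)
  have hcross := (integrableOn_rpow_mul_one_sub_rpow (p := α) (q := α) (by linarith)
    (by linarith)).const_mul (2 * a * b)
  rw [setIntegral_congr_fun measurableSet_Ioo fun y hy => sq_one_sub_rpow_sub_rpow a b α hy,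
    integral_sub (hleft.fun_add hright) hcross, integral_add hleft hright]
  simp only [integral_const_mul]
  rw [integral_rpow_mul_one_sub_rpow (by linarith) (by linarith),
    integral_rpow_mul_one_sub_rpow (by linarith) (by linarith),
    integral_rpow_mul_one_sub_rpow (by linarith) (by linarith), zero_add,
    beta_comm 1, beta_one_right (by linarith), add_comm α 1]
  ring

end ReflectedPowers

section CuspIncrement

variable {α : ℝ}

theorem sq_qCusp_sub_one_sub_qCusp (a b α : ℝ) {y : ℝ} (hy0 : y ≠ 0) (hy1 : y ≠ 1) :
    (qCusp a b α (y - 1) - qCusp a b α y) ^ 2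
      = a ^ 2 * (Ioi 0).indicator (fun t : ℝ => ((1 + t) ^ α - t ^ α) ^ 2) (y - 1)
        + b ^ 2 * (Ioi 0).indicator (fun t : ℝ => ((1 + t) ^ α - t ^ α) ^ 2) (-y)
        + (Ioo 0 1).indicator (fun t : ℝ => (b * (1 - t) ^ α - a * t ^ α) ^ 2) y := by
  simp only [qCusp, indicator_apply, mem_Ioi, mem_Ioo, sub_nonneg, sub_pos, neg_pos]
  rcases hy0.lt_or_gt with hneg | hpos
  · rw [if_neg (by linarith), if_neg hneg.not_ge, if_neg (by linarith), if_pos hneg,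
      if_neg fun h => hneg.not_gt h.1, abs_of_neg hneg, abs_of_neg (by linarith),
      show -(y - 1) = 1 + -y by ring]
    ring
  rcases hy1.lt_or_gt with hlt | hgt
  · rw [if_neg hlt.not_ge, if_pos hpos.le, if_neg hlt.not_gt, if_neg hpos.not_gt,
      if_pos ⟨hpos, hlt⟩, abs_of_pos hpos, abs_of_neg (sub_neg.2 hlt), neg_sub]
    ring
  · rw [if_pos hgt.le, if_pos hpos.le, if_pos hgt, if_neg hpos.not_gt,
      if_neg fun h => hgt.not_gt h.2, abs_of_pos hpos, abs_of_pos (sub_pos.2 hgt),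
      add_sub_cancel]
    ring

theorem integral_sq_qCusp_sub_one_sub_qCusp (a b : ℝ) (h₁ : -(1 / 2) < α) (h₂ : α < 1 / 2) :
    ∫ y : ℝ, (qCusp a b α (y - 1) - qCusp a b α y) ^ 2
      = (a ^ 2 + b ^ 2) * (∫ t in Ioi (0 : ℝ), ((1 + t) ^ α - t ^ α) ^ 2)
        + ∫ y in Ioo (0 : ℝ) 1, (b * (1 - y) ^ α - a * y ^ α) ^ 2 := by
  have hae := ((Measure.ae_ne volume (0 : ℝ)).and (Measure.ae_ne volume 1)).mono
    fun y hy => sq_qCusp_sub_one_sub_qCusp a b α hy.1 hy.2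
  have htail := (integrable_indicator_iff measurableSet_Ioi).2
    (integrableOn_Ioi_sq_one_add_rpow_sub_rpow h₁ h₂)
  have hmiddle := (integrable_indicator_iff measurableSet_Ioo).2
    (integrableOn_sq_one_sub_rpow_sub_rpow a b h₁)
  have hright := (htail.comp_sub_right 1).const_mul (a ^ 2)
  have hleft := htail.comp_neg.const_mul (b ^ 2)
  rw [integral_congr_ae hae, integral_add (hright.fun_add hleft) hmiddle, integral_add hright hleft,
    integral_const_mul, integral_const_mul, integral_sub_right_eq_self, integral_neg_eq_self,
    integral_indicator measurableSet_Ioi, integral_indicator measurableSet_Ioo, add_mul]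

end CuspIncrement

theorem cusp_gamma_closed_form_general (a b : ℝ) {α : ℝ} (hα : α ∈ Ioo (-(1 / 2) : ℝ) (1 / 2)) :
    ∫ y : ℝ, (qCusp a b α (y - 1) - qCusp a b α y) ^ 2
      = (√π * Gamma (1 + α) / (2 ^ (2 * α + 1) * Gamma (3 / 2 + α)))
        * ((cos (π * α))⁻¹ * (a ^ 2 + b ^ 2) - 2 * a * b) := by
  obtain ⟨h₁, h₂⟩ := hα
  have hβ : beta (1 + α) (1 + α) = √π * Gamma (1 + α) / (2 ^ (2 * α + 1) * Gamma (3 / 2 + α)) := by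
    rw [beta_self (by linarith)]
    ring_nf
  rw [← hβ, integral_sq_qCusp_sub_one_sub_qCusp a b h₁ h₂,
    integral_Ioi_sq_one_add_rpow_sub_rpow h₁ h₂, integral_sq_one_sub_rpow_sub_rpow a b h₁]
  ring

theorem cusp_gamma_closed_form (a b α : ℝ) (ha : 0 ≤ a) (hb : 0 ≤ b)
    (hab : ¬ (a = 0 ∧ b = 0)) (hα : α ∈ Set.Ioo (-(1/2) : ℝ) (1/2)) (hα0 : α ≠ 0) :
    ∫ y : ℝ, (qCusp a b α (y - 1) - qCusp a b α y) ^ 2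
      = (Real.sqrt π * Real.Gamma (1 + α) / ((2 : ℝ) ^ (2 * α + 1) * Real.Gamma (3/2 + α)))
        * ((Real.cos (π * α))⁻¹ * (a ^ 2 + b ^ 2) - 2 * a * b) :=
  cusp_gamma_closed_form_general a b hα
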